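/- arXiv:1907.04663 — 4 statements merged into one kernel-verified Lean document; each statement's English description precedes it below -/
import Mathlib

section
/- Assume dom f ≠ ∅. Then f is real-valued on P (i.e. f(x,z) ∈ ℝ for all (x,z) ∈ P) and f is Lipschitz continuous on P: there exists L ≥ 0 such that |f(x,z) − f(x',z')| ≤ L‖(x,z) − (x',z')‖ for all (x,z), (x',z') ∈ P. -/
open MeasureTheory Matrix Set Topology Filter

noncomputable section

/-- Feasible set of the lower level problem: `{ y | A y ≤ T x + z }`. -/
def LowerFeas {n m s : ℕ} (A : Matrix (Fin s) (Fin m) ℝ) (T : Matrix (Fin s) (Fin n) ℝ)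
    (x : Fin n → ℝ) (z : Fin s → ℝ) : Set (Fin m → ℝ) :=
  {y | A.mulVec y ≤ T.mulVec x + z}

/-- Lower level optimal solution set `Ψ(x,z) = Argmin { dᵀy | A y ≤ T x + z }`. -/
def Psi {n m s : ℕ} (d : Fin m → ℝ) (A : Matrix (Fin s) (Fin m) ℝ)
    (T : Matrix (Fin s) (Fin n) ℝ) (x : Fin n → ℝ) (z : Fin s → ℝ) : Set (Fin m → ℝ) :=
  {y | y ∈ LowerFeas A T x z ∧ ∀ y' ∈ LowerFeas A T x z, d ⬝ᵥ y ≤ d ⬝ᵥ y'}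

/-- `f(x,z) = cᵀx + inf { qᵀ y | y ∈ Ψ(x,z) }` with values in `ℝ ∪ {±∞}`
(the infimum over the empty set being `+∞`). -/
def fE {n m s : ℕ} (c : Fin n → ℝ) (q d : Fin m → ℝ) (A : Matrix (Fin s) (Fin m) ℝ)
    (T : Matrix (Fin s) (Fin n) ℝ) (x : Fin n → ℝ) (z : Fin s → ℝ) : EReal :=
  ((c ⬝ᵥ x : ℝ) : EReal) + sInf ((fun y => ((q ⬝ᵥ y : ℝ) : EReal)) '' Psi d A T x z)

/-- `P = { (x,z) | ∃ y, A y ≤ T x + z }`. -/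
def Pfeas {n m s : ℕ} (A : Matrix (Fin s) (Fin m) ℝ) (T : Matrix (Fin s) (Fin n) ℝ) :
    Set ((Fin n → ℝ) × (Fin s → ℝ)) :=
  {p | (LowerFeas A T p.1 p.2).Nonempty}

/-- `dom f = { (x,z) | f(x,z) ∈ ℝ }`. -/
def domf {n m s : ℕ} (c : Fin n → ℝ) (q d : Fin m → ℝ) (A : Matrix (Fin s) (Fin m) ℝ)
    (T : Matrix (Fin s) (Fin n) ℝ) : Set ((Fin n → ℝ) × (Fin s → ℝ)) :=
  {p | fE c q d A T p.1 p.2 ≠ ⊤ ∧ fE c q d A T p.1 p.2 ≠ ⊥}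

/-- Topological support of a Borel measure. -/
def msupport {s : ℕ} (μ : Measure (Fin s → ℝ)) : Set (Fin s → ℝ) :=
  {z | ∀ U : Set (Fin s → ℝ), IsOpen U → z ∈ U → μ U ≠ 0}

/-- `P_Z = { x | (x,z) ∈ P for all z ∈ supp μ_Z }`. -/
def PZSet {n m s : ℕ} (A : Matrix (Fin s) (Fin m) ℝ) (T : Matrix (Fin s) (Fin n) ℝ)
    (μZ : Measure (Fin s → ℝ)) : Set (Fin n → ℝ) :=
  {x | ∀ z ∈ msupport μZ, (x, z) ∈ Pfeas A T}

/-- One Fourier-Motzkin elimination step. -/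
lemma fm_step {V : Type} [AddCommGroup V] [Module ℝ V] {ι : Type} [Fintype ι]
    (a : ι → V →ₗ[ℝ] ℝ) (r : ι → ℝ) :
    ∃ (κ : Type) (_ : Fintype κ) (g : κ → V →ₗ[ℝ] ℝ), ∀ v,
      (∃ t : ℝ, ∀ i, 0 ≤ a i v + r i * t) ↔ ∀ k, 0 ≤ g k v := by
  classical
  refine ⟨ι ⊕ (ι × ι), inferInstance,
    Sum.elim (fun i => if r i = 0 then a i else 0)
      (fun p => if 0 < r p.1 ∧ r p.2 < 0 then r p.1 • a p.2 - r p.2 • a p.1 else 0), ?_⟩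
  intro v
  constructor
  · rintro ⟨t, ht⟩ (i | ⟨i, j⟩)
    · simp only [Sum.elim_inl]
      split_ifs with h
      · simpa [h] using ht i
      · simp
    · simp only [Sum.elim_inr]
      split_ifs with h
      · have h1 := mul_nonneg h.1.le (ht j)
        have h2 := mul_nonneg (neg_nonneg.2 h.2.le) (ht i)
        simp only [LinearMap.sub_apply, LinearMap.smul_apply, smul_eq_mul]
        linarith
      · simp
  · intro h
    have hz : ∀ i, r i = 0 → 0 ≤ a i v := by
      intro i hi
      simpa [hi] using h (Sum.inl i)
    have hpn : ∀ i j, 0 < r i → r j < 0 → 0 ≤ r i * a j v - r j * a i v := by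
      intro i j hi hj
      simpa [hi, hj] using h (Sum.inr (i, j))
    have key : ∃ t : ℝ, (∀ i, 0 < r i → -(a i v) / r i ≤ t) ∧
        (∀ j, r j < 0 → t ≤ -(a j v) / r j) := by
      have hlu : ∀ i j, 0 < r i → r j < 0 → -(a i v) / r i ≤ -(a j v) / r j := by
        intro i j hi hj
        rw [div_le_iff₀ hi, div_mul_eq_mul_div, le_div_iff_of_neg hj]
        linarith [hpn i j hi hj]
      by_cases hP : (Finset.univ.filter (fun i => 0 < r i)).Nonempty
      · obtain ⟨i, hi, hmax⟩ := Finset.exists_max_image _ (fun i => -(a i v) / r i) hP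
        refine ⟨-(a i v) / r i, fun k hk => hmax k (by simpa using hk), fun j hj => ?_⟩
        exact hlu i j (by simpa using hi) hj
      · have hP' : ∀ i, ¬ 0 < r i := by
          intro i hi
          exact hP ⟨i, by simpa using hi⟩
        obtain ⟨M, hM⟩ := (Set.finite_range (fun j => -(a j v) / r j)).bddBelow
        exact ⟨M, fun i hi => absurd hi (hP' i),
          fun j _ => hM (Set.mem_range_self j)⟩
    obtain ⟨t, h1, h2⟩ := key
    refine ⟨t, fun i => ?_⟩
    rcases lt_trichotomy (r i) 0 with hi | hi | hi
    · have := h2 i hi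
      rw [le_div_iff_of_neg hi] at this
      linarith
    · simpa [hi] using hz i hi
    · have := h1 i hi
      rw [div_le_iff₀ hi] at this
      linarith

/-- Projections of polyhedral cones are polyhedral. -/
lemma fm_proj (m : ℕ) : ∀ {V : Type} [AddCommGroup V] [Module ℝ V] {ι : Type} [Fintype ι]
    (a : ι → V →ₗ[ℝ] ℝ) (R : ι → Fin m → ℝ),
    ∃ (κ : Type) (_ : Fintype κ) (g : κ → V →ₗ[ℝ] ℝ), ∀ v,
      (∃ y : Fin m → ℝ, ∀ i, 0 ≤ a i v + R i ⬝ᵥ y) ↔ ∀ k, 0 ≤ g k v := by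
  induction m with
  | zero =>
    intro V _ _ ι _ a R
    refine ⟨ι, inferInstance, a, fun v => ?_⟩
    constructor
    · rintro ⟨y, hy⟩ k
      simpa [dotProduct] using hy k
    · intro h
      exact ⟨0, fun i => by simpa using h i⟩
  | succ m ih =>
    intro V _ _ ι _ a R
    obtain ⟨κ, _, g, hg⟩ := ih (V := V × ℝ)
      (fun i => (a i).comp (LinearMap.fst ℝ V ℝ) + (R i 0) • LinearMap.snd ℝ V ℝ)
      (fun i => fun j => R i j.succ)
    obtain ⟨κ', _, g', hg'⟩ := fm_step (fun k => (g k).comp (LinearMap.inl ℝ V ℝ))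
      (fun k => g k (0, 1))
    refine ⟨κ', inferInstance, g', fun v => ?_⟩
    rw [← hg' v]
    have hsplit : ∀ (k : κ) (t : ℝ),
        (g k).comp (LinearMap.inl ℝ V ℝ) v + g k (0, 1) * t = g k (v, t) := by
      intro k t
      have : (v, t) = (v, (0 : ℝ)) + t • ((0 : V), (1 : ℝ)) := by simp
      rw [this, map_add, map_smul]
      simp [mul_comm]
    simp only [hsplit]
    constructor
    · rintro ⟨y, hy⟩
      refine ⟨y 0, (hg (v, y 0)).1 ⟨fun j => y j.succ, fun i => ?_⟩⟩
      have := hy i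
      simp only [dotProduct, Fin.sum_univ_succ] at this
      simp only [dotProduct, LinearMap.add_apply, LinearMap.comp_apply, LinearMap.smul_apply,
        LinearMap.fst_apply, LinearMap.snd_apply, smul_eq_mul]
      linarith
    · rintro ⟨t, ht⟩
      obtain ⟨y, hy⟩ := (hg (v, t)).2 ht
      refine ⟨Fin.cons t y, fun i => ?_⟩
      have := hy i
      simp only [dotProduct, LinearMap.add_apply, LinearMap.comp_apply, LinearMap.smul_apply,
        LinearMap.fst_apply, LinearMap.snd_apply, smul_eq_mul] at this
      simp only [dotProduct, Fin.sum_univ_succ, Fin.cons_zero, Fin.cons_succ]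
      linarith

/-- Value function of a linear program under right-hand side perturbation. -/
lemma lp_value {m : ℕ} {ι : Type} [Fintype ι] (R : ι → Fin m → ℝ) (d : Fin m → ℝ) :
    (∀ b : ι → ℝ, (∃ y, ∀ i, R i ⬝ᵥ y ≤ b i) → ∀ t : ℝ, ∃ y, (∀ i, R i ⬝ᵥ y ≤ b i) ∧ d ⬝ᵥ y ≤ t) ∨
    ∃ (φ : (ι → ℝ) → ℝ) (K : NNReal), LipschitzWith K φ ∧
      ∀ b : ι → ℝ, (∃ y, ∀ i, R i ⬝ᵥ y ≤ b i) →
        (∃ y, (∀ i, R i ⬝ᵥ y ≤ b i) ∧ d ⬝ᵥ y = φ b) ∧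
        ∀ y, (∀ i, R i ⬝ᵥ y ≤ b i) → φ b ≤ d ⬝ᵥ y := by
  classical
  obtain ⟨κ, _, g, hg⟩ := fm_proj m (V := (ι → ℝ) × ℝ)
    (fun o : Option ι => o.elim (LinearMap.snd ℝ (ι → ℝ) ℝ)
      (fun i => (LinearMap.proj i).comp (LinearMap.fst ℝ (ι → ℝ) ℝ)))
    (fun o => o.elim (-d) (fun i => -R i))
  have hg1 : ∀ (b : ι → ℝ) (t : ℝ),
      (∃ y, (∀ i, R i ⬝ᵥ y ≤ b i) ∧ d ⬝ᵥ y ≤ t) ↔ ∀ k, 0 ≤ g k (b, t) := by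
    intro b t
    rw [← hg]
    refine exists_congr fun y => ?_
    rw [Option.forall]
    simp [neg_dotProduct, and_comm]
  have hsplit : ∀ k b t, g k (b, t) = g k (b, 0) + t * g k (0, 1) := by
    intro k b t
    have : (b, t) = (b, (0 : ℝ)) + t • ((0 : ι → ℝ), (1 : ℝ)) := by simp
    rw [this, map_add, map_smul]
    simp
  have hμ : ∀ k, 0 ≤ g k (0, 1) := by
    apply (hg1 0 1).1
    exact ⟨0, by simp, by simp⟩
  have hzero : ∀ b : ι → ℝ, (∃ y, ∀ i, R i ⬝ᵥ y ≤ b i) → ∀ k, g k (0, 1) = 0 →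
      0 ≤ g k (b, 0) := by
    rintro b ⟨y, hy⟩ k hk
    have := (hg1 b (d ⬝ᵥ y)).1 ⟨y, hy, le_rfl⟩ k
    rw [hsplit, hk] at this
    simpa using this
  by_cases hP : (Finset.univ.filter (fun k => 0 < g k (0, 1))).Nonempty
  · right
    let l : κ → (ι → ℝ) →L[ℝ] ℝ := fun k =>
      LinearMap.toContinuousLinearMap
        ((-(g k (0, 1))⁻¹) • (g k).comp (LinearMap.inl ℝ (ι → ℝ) ℝ))
    have hl : ∀ k b, l k b = -(g k (0, 1))⁻¹ * g k (b, 0) := by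
      intro k b
      simp [l]
    set S := Finset.univ.filter (fun k => 0 < g k (0, 1)) with hS
    let φ : (ι → ℝ) → ℝ := fun b => S.sup' hP (fun k => l k b)
    have hφ : ∀ b t, (∃ y, ∀ i, R i ⬝ᵥ y ≤ b i) →
        ((∃ y, (∀ i, R i ⬝ᵥ y ≤ b i) ∧ d ⬝ᵥ y ≤ t) ↔ φ b ≤ t) := by
      intro b t hb
      rw [hg1, Finset.sup'_le_iff]
      have hiff : ∀ k, 0 < g k (0, 1) → (l k b ≤ t ↔ 0 ≤ g k (b, t)) := by
        intro k hk
        rw [hl, hsplit k b t, neg_mul, ← div_eq_inv_mul, neg_le, le_div_iff₀ hk]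
        constructor <;> intro h <;> linarith
      constructor
      · intro h k hk
        exact (hiff k (by simpa [hS] using hk)).2 (h k)
      · intro h k
        rcases (hμ k).eq_or_lt with h0 | h0
        · rw [hsplit, ← h0]
          simpa using hzero b hb k h0.symm
        · exact (hiff k h0).1 (h k (by simpa [hS] using h0))
    refine ⟨φ, ∑ k, ‖l k‖₊, ?_, ?_⟩
    · apply LipschitzWith.of_le_add_mul
      intro b b'
      apply Finset.sup'_le
      intro k hk
      have h1 : l k b' ≤ φ b' := Finset.le_sup' (fun k => l k b') hk
      have h2 : l k b - l k b' ≤ ‖l k‖ * ‖b - b'‖ := by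
        rw [← map_sub]
        exact (le_abs_self _).trans ((l k).le_opNorm _)
      have h3 : ‖l k‖ ≤ ∑ k, ‖l k‖ :=
        Finset.single_le_sum (f := fun k => ‖l k‖) (fun _ _ => norm_nonneg _) (Finset.mem_univ k)
      have h4 := mul_le_mul_of_nonneg_right h3 (norm_nonneg (b - b'))
      push_cast
      rw [dist_eq_norm]
      linarith
    · intro b hb
      have hlow : ∀ y, (∀ i, R i ⬝ᵥ y ≤ b i) → φ b ≤ d ⬝ᵥ y := fun y hy =>
        (hφ b _ hb).1 ⟨y, hy, le_rfl⟩
      obtain ⟨y, hy, hy'⟩ := (hφ b (φ b) hb).2 le_rfl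
      exact ⟨⟨y, hy, le_antisymm hy' (hlow y hy)⟩, hlow⟩
  · left
    intro b hb t
    rw [hg1]
    intro k
    have h0 : g k (0, 1) = 0 := by
      by_contra hne
      exact hP ⟨k, by simpa using lt_of_le_of_ne (hμ k) (Ne.symm hne)⟩
    rw [hsplit, h0]
    simpa using hzero b hb k h0

theorem lipschitz_of_f_on_P {n m s : ℕ} (c : Fin n → ℝ) (q d : Fin m → ℝ)
    (A : Matrix (Fin s) (Fin m) ℝ) (T : Matrix (Fin s) (Fin n) ℝ)
    (hdom : (domf c q d A T).Nonempty) :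
    (∀ p ∈ Pfeas A T, fE c q d A T p.1 p.2 ≠ ⊤ ∧ fE c q d A T p.1 p.2 ≠ ⊥) ∧
    ∃ L : ℝ, 0 ≤ L ∧ ∀ p ∈ Pfeas A T, ∀ p' ∈ Pfeas A T,
      |(fE c q d A T p.1 p.2).toReal - (fE c q d A T p'.1 p'.2).toReal| ≤ L * ‖p - p'‖ := by
  classical
  obtain ⟨p₀, hp₀⟩ := hdom
  have hmem : ∀ (p : (Fin n → ℝ) × (Fin s → ℝ)) (y : Fin m → ℝ),
      y ∈ LowerFeas A T p.1 p.2 ↔ ∀ i, A i ⬝ᵥ y ≤ (T *ᵥ p.1 + p.2) i := fun p y => Iff.rfl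
  have hne₀ : (Psi d A T p₀.1 p₀.2).Nonempty := by
    by_contra hne
    rw [Set.not_nonempty_iff_eq_empty] at hne
    apply hp₀.1
    simp [fE, hne]
  obtain ⟨y₀, hy₀, hy₀min⟩ := hne₀
  rcases lp_value (fun i => A i) d with hunb | ⟨φ, K, hK, hφ⟩
  · exfalso
    obtain ⟨y, hy, hlt⟩ := hunb _ ⟨y₀, hy₀⟩ (d ⬝ᵥ y₀ - 1)
    have := hy₀min y hy
    linarith
  let B : (Fin n → ℝ) × (Fin s → ℝ) → Fin s → ℝ := fun p => T *ᵥ p.1 + p.2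
  let C : (Fin n → ℝ) × (Fin s → ℝ) → Fin s ⊕ Unit → ℝ :=
    fun p => Sum.elim (B p) (fun _ => φ (B p))
  let R : Fin s ⊕ Unit → Fin m → ℝ := Sum.elim (fun i => A i) (fun _ => d)
  have hPsi : ∀ p ∈ Pfeas A T, ∀ y, y ∈ Psi d A T p.1 p.2 ↔ ∀ i, R i ⬝ᵥ y ≤ C p i := by
    rintro p hp y
    obtain ⟨⟨w, hw, hwe⟩, hlow⟩ := hφ (B p) hp
    rw [Sum.forall]
    simp only [R, C, Sum.elim_inl, Sum.elim_inr]
    constructor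
    · rintro ⟨h1, h2⟩
      exact ⟨h1, fun _ => hwe ▸ h2 w hw⟩
    · rintro ⟨h1, h2⟩
      exact ⟨h1, fun y' hy' => (h2 ()).trans (hlow y' hy')⟩
  have hfeas : ∀ p ∈ Pfeas A T, ∃ y, ∀ i, R i ⬝ᵥ y ≤ C p i := by
    intro p hp
    obtain ⟨⟨w, hw, hwe⟩, hlow⟩ := hφ (B p) hp
    exact ⟨w, (hPsi p hp w).1 ⟨hw, fun y' hy' => hwe ▸ hlow y' hy'⟩⟩
  have hp₀P : p₀ ∈ Pfeas A T := ⟨y₀, hy₀⟩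
  rcases lp_value R q with hunb | ⟨ψ, K', hK', hψ⟩
  · exfalso
    apply hp₀.2
    have : sInf ((fun y => ((q ⬝ᵥ y : ℝ) : EReal)) '' Psi d A T p₀.1 p₀.2) = ⊥ := by
      rw [EReal.eq_bot_iff_forall_lt]
      intro t
      obtain ⟨y, hy, hyt⟩ := hunb _ (hfeas p₀ hp₀P) (t - 1)
      refine lt_of_le_of_lt (sInf_le ⟨y, (hPsi p₀ hp₀P y).2 hy, rfl⟩) ?_
      exact EReal.coe_lt_coe_iff.2 (by linarith)
    simp [fE, this]
  have hval : ∀ p ∈ Pfeas A T, fE c q d A T p.1 p.2 = ((c ⬝ᵥ p.1 + ψ (C p) : ℝ) : EReal) := by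
    intro p hp
    obtain ⟨⟨w, hw, hwe⟩, hlow⟩ := hψ (C p) (hfeas p hp)
    have : sInf ((fun y => ((q ⬝ᵥ y : ℝ) : EReal)) '' Psi d A T p.1 p.2) = (ψ (C p) : EReal) := by
      apply le_antisymm
      · exact sInf_le ⟨w, (hPsi p hp w).2 hw, by simp only [hwe]⟩
      · apply le_sInf
        rintro _ ⟨y, hy, rfl⟩
        exact EReal.coe_le_coe_iff.2 (hlow y ((hPsi p hp y).1 hy))
    rw [fE, this, EReal.coe_add]
  refine ⟨fun p hp => by rw [hval p hp]; exact ⟨EReal.coe_ne_top _, EReal.coe_ne_bot _⟩, ?_⟩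
  let Bl : ((Fin n → ℝ) × (Fin s → ℝ)) →L[ℝ] (Fin s → ℝ) := LinearMap.toContinuousLinearMap
    ((Matrix.mulVecLin T).comp (LinearMap.fst ℝ _ _) + LinearMap.snd ℝ _ _)
  have hB : LipschitzWith ‖Bl‖₊ B := by
    have : B = Bl := by
      ext p i
      simp [B, Bl]
    rw [this]
    exact Bl.lipschitz
  have hφB := hK.comp hB
  let cl : ((Fin n → ℝ) × (Fin s → ℝ)) →L[ℝ] ℝ := LinearMap.toContinuousLinearMap
    ((dotProductBilin ℝ ℝ c).comp (LinearMap.fst ℝ _ _))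
  have hc : LipschitzWith ‖cl‖₊ (fun p : (Fin n → ℝ) × (Fin s → ℝ) => c ⬝ᵥ p.1) := by
    have : (fun p : (Fin n → ℝ) × (Fin s → ℝ) => c ⬝ᵥ p.1) = cl := by
      ext p
      simp [cl]
    rw [this]
    exact cl.lipschitz
  have hC : LipschitzWith (‖Bl‖₊ + K * ‖Bl‖₊) C := by
    apply LipschitzWith.of_dist_le_mul
    intro p p'
    rw [dist_pi_le_iff (by positivity)]
    have h1 := hB.dist_le_mul p p'
    have h2 := hφB.dist_le_mul p p'
    have h3 : 0 ≤ (‖Bl‖₊ : ℝ) * dist p p' := by positivity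
    have h4 : 0 ≤ ((K * ‖Bl‖₊ : NNReal) : ℝ) * dist p p' := by positivity
    rw [NNReal.coe_add, add_mul]
    rintro (i | i)
    · have := dist_le_pi_dist (B p) (B p') i
      simp only [C, Sum.elim_inl]
      linarith
    · simp only [C, Sum.elim_inr]
      simp only [Function.comp_apply] at h2
      linarith
  have hfin := hc.add (hK'.comp hC)
  refine ⟨((‖cl‖₊ + K' * (‖Bl‖₊ + K * ‖Bl‖₊) : NNReal) : ℝ), NNReal.coe_nonneg _,
    fun p hp p' hp' => ?_⟩
  rw [hval p hp, hval p' hp', EReal.toReal_coe, EReal.toReal_coe, ← Real.dist_eq, ← dist_eq_norm]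
  exact hfin.dist_le_mul p p'
end
end

section
/- dom f ≠ ∅ holds if and only if there exists (x,z) ∈ ℝⁿ × ℝˢ such that (a) { y ∈ ℝᵐ : Ay ≤ Tx + z } is nonempty, (b) there exists u ∈ ℝˢ with Aᵀu = d and u ≤ 0 (componentwise), and (c) the function y ↦ qᵀy is bounded from below on Ψ(x,z). Moreover, under these conditions the infimum inf { qᵀy : y ∈ Ψ(x',z') } is attained for every (x',z') ∈ P. -/
open MeasureTheory Matrix Set Topology Filter

noncomputable section

/-- Farkas' lemma for linear functionals over a finite index set. -/
theorem farkas_finset {V ι : Type*} [AddCommGroup V] [Module ℝ V] [DecidableEq ι]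
    (S : Finset ι) : ∀ (a : ι → V →ₗ[ℝ] ℝ) (b : V →ₗ[ℝ] ℝ),
    (∀ x, (∀ i ∈ S, 0 ≤ a i x) → 0 ≤ b x) →
    ∃ l : ι → ℝ, (∀ i, 0 ≤ l i) ∧ ∀ x, b x = ∑ i ∈ S, l i * a i x := by
  induction S using Finset.induction_on with
  | empty =>
    intro a b h
    refine ⟨0, fun _ => le_rfl, fun x => ?_⟩
    have h1 := h x (by simp)
    have h2 := h (-x) (by simp)
    simp at h2 ⊢
    linarith
  | insert j S hj ih =>
    intro a b h
    by_cases hb : ∀ x, (∀ i ∈ S, 0 ≤ a i x) → 0 ≤ b x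
    · obtain ⟨l, hl, hx⟩ := ih a b hb
      refine ⟨Function.update l j 0, fun i => ?_, fun x => ?_⟩
      · by_cases hij : i = j
        · subst hij; simp
        · simp [hij, hl i]
      · rw [Finset.sum_insert hj, hx x]
        simp only [Function.update_self, zero_mul, zero_add]
        refine Finset.sum_congr rfl fun i hi => ?_
        have : i ≠ j := fun e => hj (e ▸ hi)
        simp [this]
    · push Not at hb
      obtain ⟨x1, hx1, hbx1⟩ := hb
      have haj : a j x1 < 0 := by
        by_contra hcon
        push Not at hcon
        have := h x1 (fun i hi => by
          rcases Finset.mem_insert.1 hi with rfl | hi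
          · exact hcon
          · exact hx1 i hi)
        linarith
      obtain ⟨x0, hx0, hbx0, hj0⟩ : ∃ x0, (∀ i ∈ S, 0 ≤ a i x0) ∧ b x0 < 0 ∧ a j x0 = -1 := by
        have hpos : 0 < (-(a j x1))⁻¹ := inv_pos.2 (by linarith)
        refine ⟨(-(a j x1))⁻¹ • x1, fun i hi => ?_, ?_, ?_⟩
        · rw [map_smul, smul_eq_mul]; exact mul_nonneg hpos.le (hx1 i hi)
        · rw [map_smul, smul_eq_mul]; exact mul_neg_of_pos_of_neg hpos hbx1
        · rw [map_smul, smul_eq_mul]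
          have := haj.ne
          field_simp
      obtain ⟨l, hl, hx⟩ := ih (fun i => a i + a i x0 • a j) (b + b x0 • a j) (by
        intro x hx
        have := h (x + a j x • x0) (fun i hi => by
          rcases Finset.mem_insert.1 hi with rfl | hi
          · simp [hj0]
          · have := hx i hi
            simp at this ⊢
            linarith)
        simp at this ⊢
        linarith)
      refine ⟨Function.update l j (∑ i ∈ S, l i * a i x0 - b x0), fun i => ?_, fun x => ?_⟩
      · by_cases hij : i = j
        · subst hij
          have : 0 ≤ ∑ k ∈ S, l k * a k x0 :=
            Finset.sum_nonneg fun k hk => mul_nonneg (hl k) (hx0 k hk)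
          simp only [Function.update_self]
          linarith
        · simp [hij, hl i]
      · rw [Finset.sum_insert hj]
        have h1 : ∑ i ∈ S, Function.update l j (∑ i ∈ S, l i * a i x0 - b x0) i * a i x
            = ∑ i ∈ S, l i * a i x := by
          refine Finset.sum_congr rfl fun i hi => ?_
          have : i ≠ j := fun e => hj (e ▸ hi)
          simp [this]
        have h2 := hx x
        simp only [LinearMap.add_apply, LinearMap.smul_apply, smul_eq_mul, mul_add,
          Finset.sum_add_distrib] at h2
        have h3 : ∑ i ∈ S, l i * (a i x0 * a j x) = (∑ i ∈ S, l i * a i x0) * a j x := by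
          rw [Finset.sum_mul]
          exact Finset.sum_congr rfl fun i _ => by ring
        rw [h1, Function.update_self]
        rw [h3] at h2
        linarith

/-- Inhomogeneous Farkas' lemma. -/
theorem farkas_infeasible {V ι : Type*} [AddCommGroup V] [Module ℝ V] [Fintype ι]
    (B : ι → V →ₗ[ℝ] ℝ) (b : ι → ℝ) (h : ¬ ∃ y, ∀ i, B i y ≤ b i) :
    ∃ l : ι → ℝ, (∀ i, 0 ≤ l i) ∧ (∀ y, ∑ i, l i * B i y = 0) ∧ ∑ i, l i * b i < 0 := by
  classical
  let a : Option ι → (V × ℝ) →ₗ[ℝ] ℝ := fun o => o.elim (LinearMap.snd ℝ V ℝ)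
    (fun i => b i • LinearMap.snd ℝ V ℝ - (B i).comp (LinearMap.fst ℝ V ℝ))
  obtain ⟨l, hl, hx⟩ := farkas_finset Finset.univ a (-LinearMap.snd ℝ V ℝ) (by
    rintro ⟨y, t⟩ hy
    have ht : 0 ≤ t := by simpa [a] using hy none (Finset.mem_univ _)
    have hi : ∀ i, B i y ≤ b i * t := fun i => by
      simpa [a] using hy (some i) (Finset.mem_univ _)
    have : ¬ 0 < t := fun htp => h ⟨t⁻¹ • y, fun i => by
      rw [map_smul, smul_eq_mul, inv_mul_le_iff₀ htp]
      linarith [hi i]⟩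
    simp
    linarith)
  refine ⟨fun i => l (some i), fun i => hl _, fun y => ?_, ?_⟩
  · have := hx (y, 0)
    simp [a, Fintype.sum_option] at this
    linarith
  · have := hx (0, 1)
    simp [a, Fintype.sum_option] at this
    linarith [hl none]

/-- A linear program which is feasible and bounded attains its minimum. -/
theorem lp_attain {V ι : Type*} [AddCommGroup V] [Module ℝ V] [Fintype ι]
    (B : ι → V →ₗ[ℝ] ℝ) (b : ι → ℝ) (q : V →ₗ[ℝ] ℝ) (hne : ∃ y, ∀ i, B i y ≤ b i)
    (M : ℝ) (hM : ∀ y, (∀ i, B i y ≤ b i) → M ≤ q y) :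
    ∃ y, (∀ i, B i y ≤ b i) ∧ ∀ y', (∀ i, B i y' ≤ b i) → q y ≤ q y' := by
  let F : Set V := {y | ∀ i, B i y ≤ b i}
  have hbdd : BddBelow (q '' F) := ⟨M, by rintro _ ⟨y, hy, rfl⟩; exact hM y hy⟩
  obtain ⟨y0, hy0⟩ := hne
  have hneF : (q '' F).Nonempty := ⟨_, y0, hy0, rfl⟩
  set v := sInf (q '' F) with hv
  have hle : ∀ y, (∀ i, B i y ≤ b i) → v ≤ q y := fun y hy => csInf_le hbdd ⟨y, hy, rfl⟩
  by_cases hex : ∃ y, ∀ o : Option ι, (o.elim q B) y ≤ (o.elim v b : ℝ)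
  · obtain ⟨y, hy⟩ := hex
    exact ⟨y, fun i => hy (some i), fun y' hy' => le_trans (hy none) (hle y' hy')⟩
  · exfalso
    obtain ⟨l, hl, h0, hlt⟩ := farkas_infeasible (fun o : Option ι => o.elim q B)
      (fun o => o.elim v b) hex
    simp only [Fintype.sum_option, Option.elim] at h0 hlt
    have key : ∀ y, (∀ i, B i y ≤ b i) → -∑ i, l (some i) * b i ≤ l none * q y := by
      intro y hy
      have h1 := h0 y
      have h2 : ∑ i, l (some i) * B i y ≤ ∑ i, l (some i) * b i :=
        Finset.sum_le_sum fun i _ => mul_le_mul_of_nonneg_left (hy i) (hl _)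
      linarith
    rcases (hl none).eq_or_lt with h1 | h1
    · have := key y0 hy0
      rw [← h1] at this hlt
      linarith
    · have h2 : (-∑ i, l (some i) * b i) / l none ≤ v := by
        refine le_csInf hneF ?_
        rintro _ ⟨y, hy, rfl⟩
        rw [div_le_iff₀ h1]
        linarith [key y hy]
      rw [div_le_iff₀ h1] at h2
      linarith

/-- If a linear functional is bounded below on a nonempty polyhedron, it is a nonpositive
combination of the constraint functionals. -/
theorem lp_dual {V ι : Type*} [AddCommGroup V] [Module ℝ V] [Fintype ι]
    (B : ι → V →ₗ[ℝ] ℝ) (b : ι → ℝ) (q : V →ₗ[ℝ] ℝ) (hne : ∃ y, ∀ i, B i y ≤ b i)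
    (M : ℝ) (hM : ∀ y, (∀ i, B i y ≤ b i) → M ≤ q y) :
    ∃ l : ι → ℝ, (∀ i, 0 ≤ l i) ∧ ∀ y, q y = -∑ i, l i * B i y := by
  classical
  obtain ⟨y0, hy0⟩ := hne
  obtain ⟨l, hl, hx⟩ := farkas_finset Finset.univ (fun i => -B i) q (by
    intro w hw
    by_contra hq
    push Not at hq
    have hM0 := hM y0 hy0
    have ht : 0 ≤ (q y0 - M + 1) / (-q w) := div_nonneg (by linarith) (by linarith)
    have h1 := hM (y0 + ((q y0 - M + 1) / (-q w)) • w) (fun i => by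
      have h2 := hw i (Finset.mem_univ _)
      simp only [LinearMap.neg_apply] at h2
      rw [map_add, map_smul, smul_eq_mul]
      have := mul_nonneg ht h2
      linarith [hy0 i])
    rw [map_add, map_smul, smul_eq_mul] at h1
    have h3 : (q y0 - M + 1) / (-q w) * q w = -(q y0 - M + 1) := by
      have := hq.ne
      field_simp
    linarith)
  exact ⟨l, hl, fun y => by rw [hx y]; simp⟩

/-- Weak duality. -/
theorem lp_weak {V ι : Type*} [AddCommGroup V] [Module ℝ V] [Fintype ι]
    (B : ι → V →ₗ[ℝ] ℝ) (b : ι → ℝ) (q : V →ₗ[ℝ] ℝ) (l : ι → ℝ) (hl : ∀ i, 0 ≤ l i)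
    (hq : ∀ y, q y = -∑ i, l i * B i y) (y : V) (hy : ∀ i, B i y ≤ b i) :
    -∑ i, l i * b i ≤ q y := by
  have h2 : ∑ i, l i * B i y ≤ ∑ i, l i * b i :=
    Finset.sum_le_sum fun i _ => mul_le_mul_of_nonneg_left (hy i) (hl _)
  rw [hq y]
  linarith

/-- The functional `y ↦ vᵀ y`. -/
def dotL {m : ℕ} (v : Fin m → ℝ) : (Fin m → ℝ) →ₗ[ℝ] ℝ where
  toFun y := v ⬝ᵥ y
  map_add' := dotProduct_add v
  map_smul' := fun r y => dotProduct_smul r v y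

theorem dotL_apply {m : ℕ} (v y : Fin m → ℝ) : dotL v y = v ⬝ᵥ y := rfl

theorem mem_LowerFeas {n m s : ℕ} (A : Matrix (Fin s) (Fin m) ℝ)
    (T : Matrix (Fin s) (Fin n) ℝ) (x : Fin n → ℝ) (z : Fin s → ℝ) (y : Fin m → ℝ) :
    y ∈ LowerFeas A T x z ↔ ∀ i, dotL (A i) y ≤ (T.mulVec x + z) i := Iff.rfl

theorem sum_dotL {m s : ℕ} (A : Matrix (Fin s) (Fin m) ℝ) (u : Fin s → ℝ) (y : Fin m → ℝ) :
    ∑ i, u i * dotL (A i) y = Aᵀ.mulVec u ⬝ᵥ y := by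
  rw [mulVec_transpose, ← dotProduct_mulVec]
  rfl

theorem dual_of_mem_Psi {n m s : ℕ} {d : Fin m → ℝ} {A : Matrix (Fin s) (Fin m) ℝ}
    {T : Matrix (Fin s) (Fin n) ℝ} {x : Fin n → ℝ} {z : Fin s → ℝ} {y : Fin m → ℝ}
    (hy : y ∈ Psi d A T x z) : ∃ u : Fin s → ℝ, Aᵀ.mulVec u = d ∧ u ≤ 0 := by
  obtain ⟨l, hl, h⟩ := lp_dual (fun i => dotL (A i)) (T.mulVec x + z) (dotL d)
    ⟨y, hy.1⟩ (d ⬝ᵥ y) (fun y' hy' => hy.2 y' hy')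
  refine ⟨-l, ?_, fun i => by simpa using hl i⟩
  refine dotProduct_eq _ _ fun w => ?_
  have := h w
  rw [sum_dotL] at this
  rw [mulVec_neg, neg_dotProduct, ← this]
  rfl

theorem Psi_nonempty {n m s : ℕ} {d : Fin m → ℝ} {A : Matrix (Fin s) (Fin m) ℝ}
    {T : Matrix (Fin s) (Fin n) ℝ} {x : Fin n → ℝ} {z : Fin s → ℝ}
    (hne : (LowerFeas A T x z).Nonempty) {u : Fin s → ℝ} (hu : Aᵀ.mulVec u = d)
    (hu0 : u ≤ 0) : (Psi d A T x z).Nonempty := by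
  obtain ⟨y, hy, hmin⟩ := lp_attain (fun i => dotL (A i)) (T.mulVec x + z) (dotL d) hne _
    (lp_weak (fun i => dotL (A i)) (T.mulVec x + z) (dotL d) (-u)
      (fun i => by simpa using hu0 i) (fun y => by
        rw [sum_dotL, mulVec_neg, hu, neg_dotProduct, neg_neg]; rfl))
  exact ⟨y, hy, fun y' hy' => hmin y' hy'⟩

theorem mem_Psi_iff {n m s : ℕ} {d : Fin m → ℝ} {A : Matrix (Fin s) (Fin m) ℝ}
    {T : Matrix (Fin s) (Fin n) ℝ} {x : Fin n → ℝ} {z : Fin s → ℝ} {y0 : Fin m → ℝ}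
    (hy0 : y0 ∈ Psi d A T x z) (y : Fin m → ℝ) : y ∈ Psi d A T x z ↔
      ∀ o : Option (Fin s), (o.elim (dotL d) (fun i => dotL (A i))) y ≤
        (o.elim (d ⬝ᵥ y0) (T.mulVec x + z) : ℝ) := by
  constructor
  · rintro ⟨h1, h2⟩ (_ | i)
    · exact h2 y0 hy0.1
    · exact h1 i
  · intro h
    exact ⟨fun i => h (some i), fun y' hy' => le_trans (h none) (hy0.2 y' hy')⟩

theorem attained_of_cond {n m s : ℕ} (q d : Fin m → ℝ)
    (A : Matrix (Fin s) (Fin m) ℝ) (T : Matrix (Fin s) (Fin n) ℝ)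
    (h : ∃ (x : Fin n → ℝ) (z : Fin s → ℝ),
        (LowerFeas A T x z).Nonempty ∧
        (∃ u : Fin s → ℝ, Aᵀ.mulVec u = d ∧ u ≤ 0) ∧
        BddBelow ((fun y => q ⬝ᵥ y) '' Psi d A T x z)) :
      ∀ p ∈ Pfeas A T, ∃ y ∈ Psi d A T p.1 p.2,
        ∀ y' ∈ Psi d A T p.1 p.2, q ⬝ᵥ y ≤ q ⬝ᵥ y' := by
  obtain ⟨x, z, hne, ⟨u, hu, hu0⟩, M, hM⟩ := h
  intro p hp
  obtain ⟨y0, hy0⟩ := Psi_nonempty hne hu hu0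
  obtain ⟨y1, hy1⟩ := Psi_nonempty (x := p.1) (z := p.2) hp hu hu0
  obtain ⟨l, hl, hq⟩ := lp_dual (fun o : Option (Fin s) => o.elim (dotL d) (fun i => dotL (A i)))
    (fun o => o.elim (d ⬝ᵥ y0) (T.mulVec x + z)) (dotL q)
    ⟨y0, (mem_Psi_iff hy0 y0).1 hy0⟩ M
    (fun y hy => hM ⟨y, (mem_Psi_iff hy0 y).2 hy, rfl⟩)
  obtain ⟨y, hy, hmin⟩ := lp_attain
    (fun o : Option (Fin s) => o.elim (dotL d) (fun i => dotL (A i)))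
    (fun o => o.elim (d ⬝ᵥ y1) (T.mulVec p.1 + p.2)) (dotL q)
    ⟨y1, (mem_Psi_iff hy1 y1).1 hy1⟩ _ (lp_weak _ _ _ l hl hq)
  exact ⟨y, (mem_Psi_iff hy1 y).2 hy, fun y' hy' => hmin y' ((mem_Psi_iff hy1 y').1 hy')⟩

theorem domf_nonempty_iff {n m s : ℕ} (c : Fin n → ℝ) (q d : Fin m → ℝ)
    (A : Matrix (Fin s) (Fin m) ℝ) (T : Matrix (Fin s) (Fin n) ℝ) :
    ((domf c q d A T).Nonempty ↔
      ∃ (x : Fin n → ℝ) (z : Fin s → ℝ),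
        (LowerFeas A T x z).Nonempty ∧
        (∃ u : Fin s → ℝ, Aᵀ.mulVec u = d ∧ u ≤ 0) ∧
        BddBelow ((fun y => q ⬝ᵥ y) '' Psi d A T x z)) ∧
    ((∃ (x : Fin n → ℝ) (z : Fin s → ℝ),
        (LowerFeas A T x z).Nonempty ∧
        (∃ u : Fin s → ℝ, Aᵀ.mulVec u = d ∧ u ≤ 0) ∧
        BddBelow ((fun y => q ⬝ᵥ y) '' Psi d A T x z)) →
      ∀ p ∈ Pfeas A T, ∃ y ∈ Psi d A T p.1 p.2,
        ∀ y' ∈ Psi d A T p.1 p.2, q ⬝ᵥ y ≤ q ⬝ᵥ y') := by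
  refine ⟨⟨?_, ?_⟩, attained_of_cond q d A T⟩
  · rintro ⟨⟨x, z⟩, htop, hbot⟩
    simp only [fE] at htop hbot
    have hne : (Psi d A T x z).Nonempty := by
      by_contra hcon
      rw [not_nonempty_iff_eq_empty] at hcon
      apply htop
      rw [hcon]
      simp
    obtain ⟨y, hy⟩ := hne
    refine ⟨x, z, ⟨y, hy.1⟩, dual_of_mem_Psi hy, ?_⟩
    set I := sInf ((fun y => ((q ⬝ᵥ y : ℝ) : EReal)) '' Psi d A T x z) with hI
    have hle : ∀ y' ∈ Psi d A T x z, I ≤ ((q ⬝ᵥ y' : ℝ) : EReal) :=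
      fun y' hy' => sInf_le ⟨y', hy', rfl⟩
    have hIb : I ≠ ⊥ := by
      intro e
      apply hbot
      rw [e]
      simp
    refine ⟨I.toReal, ?_⟩
    rintro _ ⟨y', hy', rfl⟩
    have hIt : I ≠ ⊤ := fun e => by
      have := hle y' hy'
      rw [e, top_le_iff] at this
      exact EReal.coe_ne_top _ this
    have := hle y' hy'
    rw [← EReal.coe_toReal hIt hIb] at this
    exact EReal.coe_le_coe_iff.1 this
  · intro h
    have hatt := attained_of_cond q d A T h
    obtain ⟨x, z, hne, -, -⟩ := h
    obtain ⟨y, hy, hmin⟩ := hatt (x, z) hne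
    have hI : sInf ((fun y => ((q ⬝ᵥ y : ℝ) : EReal)) '' Psi d A T x z)
        = ((q ⬝ᵥ y : ℝ) : EReal) := by
      apply le_antisymm
      · exact sInf_le ⟨y, hy, rfl⟩
      · refine le_sInf ?_
        rintro _ ⟨y', hy', rfl⟩
        exact EReal.coe_le_coe_iff.2 (hmin y' hy')
    refine ⟨(x, z), ?_, ?_⟩
    · simp only [fE]
      rw [hI, ← EReal.coe_add]
      exact EReal.coe_ne_top _
    · simp only [fE]
      rw [hI, ← EReal.coe_add]
      exact EReal.coe_ne_bot _
end
end

section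
/- Assume dom f ≠ ∅ and fix α ∈ (0,1). Then the function Q_{VaR_α} : P_Z → ℝ, Q_{VaR_α}(x) := inf { η ∈ ℝ : μ_Z({ z ∈ ℝˢ : f(x,z) ≤ η }) ≥ α }, is continuous on P_Z. Moreover, if X ⊆ P_Z is nonempty and compact, then Q_{VaR_α} attains its minimum over X. -/
open MeasureTheory Matrix Set Topology Filter
open scoped ENNReal NNReal

noncomputable section

theorem clampLemma {I J : Type} (l : J → ℝ) (u : I → ℝ) (t ε : ℝ) (hε : 0 ≤ ε)
    (h : ∀ j i, l j ≤ u i) (hl : ∀ j, l j ≤ t + ε) (hu : ∀ i, t - ε ≤ u i) :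
    ∃ t', |t' - t| ≤ ε ∧ (∀ j, l j ≤ t') ∧ ∀ i, t' ≤ u i := by
  have := exists_between_of_forall_le (s := insert (t - ε) (range l))
    (t := insert (t + ε) (range u)) ⟨_, mem_insert _ _⟩ ⟨_, mem_insert _ _⟩ (by
      rintro x (rfl | ⟨j, rfl⟩) y (rfl | ⟨i, rfl⟩)
      · linarith
      · exact hu i
      · exact hl j
      · exact h j i)
  obtain ⟨t', h1, h2⟩ := this
  refine ⟨t', ?_, fun j => h1 (Or.inr ⟨j, rfl⟩), fun i => h2 (Or.inr ⟨i, rfl⟩)⟩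
  have a := h1 (Or.inl rfl)
  have b := h2 (Or.inl rfl)
  rw [abs_le]; constructor <;> linarith

theorem dot_diff_le {m : ℕ} (d y y' : Fin m → ℝ) (r : ℝ) (h : ∀ k, |y' k - y k| ≤ r) :
    |d ⬝ᵥ y' - d ⬝ᵥ y| ≤ (∑ k, |d k|) * r := by
  rw [← dotProduct_sub, dotProduct, Finset.sum_mul]
  refine (Finset.abs_sum_le_sum_abs _ _).trans (Finset.sum_le_sum fun k _ => ?_)
  rw [abs_mul]
  exact mul_le_mul_of_nonneg_left (h k) (abs_nonneg _)

theorem hoffman (m : ℕ) : ∀ (ι : Type) [Finite ι] (M : ι → Fin m → ℝ),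
    ∃ L : ℝ, 0 ≤ L ∧ ∀ (b b' : ι → ℝ) (y y'' : Fin m → ℝ) (δ : ℝ), 0 ≤ δ →
      (∀ i, M i ⬝ᵥ y ≤ b i) → (∀ i, M i ⬝ᵥ y'' ≤ b' i) → (∀ i, |b' i - b i| ≤ δ) →
      ∃ y' : Fin m → ℝ, (∀ i, M i ⬝ᵥ y' ≤ b' i) ∧ ∀ k, |y' k - y k| ≤ L * δ := by
  induction m with
  | zero =>
    intro ι _ M
    exact ⟨0, le_rfl, fun b b' y y'' δ hδ _ h _ => ⟨y'', h, fun k => k.elim0⟩⟩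
  | succ m ih =>
    intro ι _ M
    have dotc : ∀ i (y : Fin (m+1) → ℝ), M i ⬝ᵥ y = M i 0 * y 0 + Fin.tail (M i) ⬝ᵥ Fin.tail y := by
      intro i y
      simp [dotProduct, Fin.sum_univ_succ, Fin.tail]
    -- reduced system
    let R (b : ι → ℝ) : {i // M i 0 = 0} ⊕ ({i // 0 < M i 0} × {i // M i 0 < 0}) → ℝ :=
      Sum.elim (fun i => b i) (fun p => M p.1 0 * b p.2 - M p.2 0 * b p.1)
    let N : {i // M i 0 = 0} ⊕ ({i // 0 < M i 0} × {i // M i 0 < 0}) → Fin m → ℝ :=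
      Sum.elim (fun i => Fin.tail (M i))
        (fun p => M p.1 0 • Fin.tail (M p.2) - M p.2 0 • Fin.tail (M p.1))
    have red : ∀ (b : ι → ℝ) (y : Fin (m+1) → ℝ), (∀ i, M i ⬝ᵥ y ≤ b i) →
        ∀ p, N p ⬝ᵥ Fin.tail y ≤ R b p := by
      intro b y h p
      rcases p with ⟨i, hi⟩ | ⟨⟨i, hi⟩, ⟨j, hj⟩⟩
      · have := h i
        rw [dotc, hi] at this
        simpa [N, R] using this
      · have h1 := h i
        have h2 := h j
        rw [dotc] at h1 h2
        simp only [N, R, Sum.elim_inr, sub_dotProduct, smul_dotProduct, smul_eq_mul]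
        nlinarith [mul_le_mul_of_nonneg_left h2 hi.le, mul_le_mul_of_nonpos_left h1 hj.le]
    obtain ⟨L, hL, H⟩ := ih _ N
    obtain ⟨K, hK⟩ := (Set.finite_range (fun i => |M i 0|)).bddAbove
    have hK : ∀ i, |M i 0| ≤ |K| := fun i => (hK ⟨i, rfl⟩).trans (le_abs_self _)
    obtain ⟨C, hC⟩ := (Set.finite_range (fun i => (1 + (∑ k, |Fin.tail (M i) k|) *
      (L * (1 + 2 * |K|))) / |M i 0|)).bddAbove
    have hC : ∀ i, (1 + (∑ k, |Fin.tail (M i) k|) *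
      (L * (1 + 2 * |K|))) / |M i 0| ≤ |C| := fun i => (hC ⟨i, rfl⟩).trans (le_abs_self _)
    have hK0 := abs_nonneg K
    have hC0 := abs_nonneg C
    refine ⟨|C| + L * (1 + 2 * |K|), by positivity, ?_⟩
    intro b b' y y'' δ hδ hy hy'' hb
    obtain ⟨w, hw, hwy⟩ := H (R b) (R b') (Fin.tail y) (Fin.tail y'') ((1 + 2 * |K|) * δ)
      (by positivity) (red b y hy) (red b' y'' hy'') (by
        rintro (⟨i, hi⟩ | ⟨⟨i, hi⟩, ⟨j, hj⟩⟩)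
        · simp only [R, Sum.elim_inl]
          have := hb i
          nlinarith [mul_nonneg hK0 hδ]
        · simp only [R, Sum.elim_inr]
          have e : M i 0 * b' j - M j 0 * b' i - (M i 0 * b j - M j 0 * b i)
            = M i 0 * (b' j - b j) - M j 0 * (b' i - b i) := by ring
          rw [e]
          refine (abs_sub _ _).trans ?_
          rw [abs_mul, abs_mul]
          have e1 := mul_le_mul (hK i) (hb j) (abs_nonneg _) hK0
          have e2 := mul_le_mul (hK j) (hb i) (abs_nonneg _) hK0
          linarith)
    have key : ∀ i, M i 0 ≠ 0 → |(b' i - Fin.tail (M i) ⬝ᵥ w) / M i 0 -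
        (b i - Fin.tail (M i) ⬝ᵥ Fin.tail y) / M i 0| ≤ |C| * δ := by
      intro i hi
      have hpos := abs_pos.mpr hi
      rw [← sub_div, abs_div]
      have e1 := dot_diff_le (Fin.tail (M i)) _ _ _ hwy
      have e2 := hb i
      have e3 : |b' i - Fin.tail (M i) ⬝ᵥ w - (b i - Fin.tail (M i) ⬝ᵥ Fin.tail y)| ≤
          (1 + (∑ k, |Fin.tail (M i) k|) * (L * (1 + 2 * |K|))) * δ := by
        have : b' i - Fin.tail (M i) ⬝ᵥ w - (b i - Fin.tail (M i) ⬝ᵥ Fin.tail y) =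
          (b' i - b i) - (Fin.tail (M i) ⬝ᵥ w - Fin.tail (M i) ⬝ᵥ Fin.tail y) := by ring
        rw [this]
        refine (abs_sub _ _).trans ?_
        linarith
      have e4 := hC i
      rw [div_le_iff₀ hpos] at e4 ⊢
      nlinarith [mul_le_mul_of_nonneg_right e4 hδ]
    obtain ⟨t, ht, htl, htu⟩ := clampLemma
      (fun j : {i // M i 0 < 0} => (b' j - Fin.tail (M j) ⬝ᵥ w) / M j 0)
      (fun i : {i // 0 < M i 0} => (b' i - Fin.tail (M i) ⬝ᵥ w) / M i 0)
      (y 0) (|C| * δ) (by positivity)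
      (by
        rintro ⟨j, hj⟩ ⟨i, hi⟩
        have := hw (Sum.inr ⟨⟨i, hi⟩, ⟨j, hj⟩⟩)
        simp only [N, R, Sum.elim_inr, sub_dotProduct, smul_dotProduct, smul_eq_mul] at this
        simp only
        rw [div_le_iff_of_neg hj, div_mul_eq_mul_div, div_le_iff₀ hi]
        linarith)
      (by
        rintro ⟨j, hj⟩
        simp only
        have h1 := (abs_le.mp (key j hj.ne)).2
        have h2 : (b j - Fin.tail (M j) ⬝ᵥ Fin.tail y) / M j 0 ≤ y 0 := by
          rw [div_le_iff_of_neg hj]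
          have := hy j
          rw [dotc] at this
          linarith
        linarith)
      (by
        rintro ⟨j, hj⟩
        simp only
        have h1 := (abs_le.mp (key j hj.ne')).1
        have h2 : y 0 ≤ (b j - Fin.tail (M j) ⬝ᵥ Fin.tail y) / M j 0 := by
          rw [le_div_iff₀ hj]
          have := hy j
          rw [dotc] at this
          linarith
        linarith)
    refine ⟨Fin.cons t w, ?_, ?_⟩
    · intro i
      rw [dotc, Fin.cons_zero, Fin.tail_cons]
      rcases lt_trichotomy (M i 0) 0 with hi | hi | hi
      · have := htl ⟨i, hi⟩
        simp only at this
        rw [div_le_iff_of_neg hi] at this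
        linarith
      · have := hw (Sum.inl ⟨i, hi⟩)
        simp only [N, R, Sum.elim_inl] at this
        rw [hi]; linarith
      · have := htu ⟨i, hi⟩
        simp only at this
        rw [le_div_iff₀ hi] at this
        linarith
    · intro k
      have p1 : 0 ≤ |C| * δ := by positivity
      have p2 : 0 ≤ L * ((1 + 2 * |K|) * δ) := by positivity
      refine Fin.cases ?_ (fun k => ?_) k
      · simp only [Fin.cons_zero]
        linarith
      · simp only [Fin.cons_succ]
        have := hwy k
        simp only [Fin.tail] at this
        linarith

/-- value function of a linear program -/
theorem lpValue {m : ℕ} {ι : Type} [Finite ι] (M : ι → Fin m → ℝ) (d : Fin m → ℝ)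
    (b0 : ι → ℝ) (y0 : Fin m → ℝ) (hy0 : ∀ i, M i ⬝ᵥ y0 ≤ b0 i) (v0 : ℝ)
    (hv0 : ∀ y, (∀ i, M i ⬝ᵥ y ≤ b0 i) → v0 ≤ d ⬝ᵥ y) :
    ∃ (L : ℝ) (v : (ι → ℝ) → ℝ), 0 ≤ L ∧
      (∀ b, (∃ y, ∀ i, M i ⬝ᵥ y ≤ b i) → ∃ y, (∀ i, M i ⬝ᵥ y ≤ b i) ∧ d ⬝ᵥ y = v b) ∧
      (∀ b y, (∀ i, M i ⬝ᵥ y ≤ b i) → v b ≤ d ⬝ᵥ y) ∧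
      ∀ b b' (δ : ℝ), 0 ≤ δ → (∃ y, ∀ i, M i ⬝ᵥ y ≤ b i) → (∃ y, ∀ i, M i ⬝ᵥ y ≤ b' i) →
        (∀ i, |b' i - b i| ≤ δ) → v b' ≤ v b + L * δ := by
  obtain ⟨L, hL, H⟩ := hoffman m ι M
  obtain ⟨L', hL', H'⟩ := hoffman m (Option ι) (fun o => o.elim d M)
  have att : ∀ b : ι → ℝ, (∃ y, ∀ i, M i ⬝ᵥ y ≤ b i) → ∃ y, (∀ i, M i ⬝ᵥ y ≤ b i) ∧
      ∀ y', (∀ i, M i ⬝ᵥ y' ≤ b i) → d ⬝ᵥ y ≤ d ⬝ᵥ y' := by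
    rintro b ⟨y1, hy1⟩
    -- bounded below
    obtain ⟨δ, hδ⟩ := (Set.finite_range (fun i => |b0 i - b i|)).bddAbove
    have hδ : ∀ i, |b0 i - b i| ≤ |δ| := fun i => (hδ ⟨i, rfl⟩).trans (le_abs_self _)
    have hbd : ∀ y, (∀ i, M i ⬝ᵥ y ≤ b i) → v0 - (∑ k, |d k|) * (L * |δ|) ≤ d ⬝ᵥ y := by
      intro y hy
      obtain ⟨y', h1, h2⟩ := H b b0 y y0 |δ| (abs_nonneg _) hy hy0 hδ
      have e1 := hv0 y' h1
      have e2 := (abs_le.mp (dot_diff_le d y y' _ h2)).2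
      linarith
    -- compact set
    let S : Set (Fin m → ℝ) := {y | (∀ i, M i ⬝ᵥ y ≤ b i) ∧
      y ∈ Metric.closedBall y1 (L' * (d ⬝ᵥ y1 - (v0 - (∑ k, |d k|) * (L * |δ|))))}
    have hg := hbd y1 hy1
    have near : ∀ y, (∀ i, M i ⬝ᵥ y ≤ b i) → d ⬝ᵥ y ≤ d ⬝ᵥ y1 → ∃ y' ∈ S, d ⬝ᵥ y' ≤ d ⬝ᵥ y := by
      intro y hy hle
      have hg2 := hbd y hy
      obtain ⟨y', h1, h2⟩ := H' (fun o => o.elim (d ⬝ᵥ y1) b) (fun o => o.elim (d ⬝ᵥ y) b) y1 y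
        (d ⬝ᵥ y1 - (v0 - (∑ k, |d k|) * (L * |δ|))) (by linarith)
        (by rintro (_ | i) <;> simp [hy1]) (by rintro (_ | i) <;> simp [hy])
        (by
          rintro (_ | i)
          · simp only [Option.elim]; rw [abs_le]; constructor <;> linarith
          · simp only [Option.elim]; simp; linarith)
      refine ⟨y', ⟨fun i => h1 (some i), ?_⟩, h1 none⟩
      rw [Metric.mem_closedBall, dist_pi_le_iff (by apply mul_nonneg hL'; linarith)]
      exact fun k => h2 k
    have hS : IsCompact S := by
      have : S = (⋂ i, {y | M i ⬝ᵥ y ≤ b i}) ∩ Metric.closedBall y1 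
        (L' * (d ⬝ᵥ y1 - (v0 - (∑ k, |d k|) * (L * |δ|)))) := by
          ext y; simp [S]
      rw [this]
      refine (isCompact_closedBall _ _).inter_left (isClosed_iInter fun i => ?_)
      exact isClosed_le (by fun_prop) continuous_const
    obtain ⟨y2, hy2, _⟩ := near y1 hy1 le_rfl
    obtain ⟨y, hyS, hmin⟩ := hS.exists_isMinOn ⟨y2, hy2⟩
      (f := fun y => d ⬝ᵥ y) (by fun_prop)
    refine ⟨y, hyS.1, fun y' hy' => ?_⟩
    rcases le_total (d ⬝ᵥ y') (d ⬝ᵥ y1) with h | h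
    · obtain ⟨z, hz, hzl⟩ := near y' hy' h
      exact (hmin hz).trans hzl
    · obtain ⟨z, hz, hzl⟩ := near y1 hy1 le_rfl
      exact ((hmin hz).trans hzl).trans h
  choose! Y hY1 hY2 using att
  refine ⟨(∑ k, |d k|) * L, fun b => d ⬝ᵥ Y b, by positivity, fun b hb => ⟨Y b, hY1 b hb, rfl⟩,
    fun b y hy => hY2 b ⟨y, hy⟩ y hy, ?_⟩
  intro b b' δ hδ hb hb' hd
  obtain ⟨y', h1, h2⟩ := H b b' (Y b) (Y b') δ hδ (hY1 b hb) (hY1 b' hb') hd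
  have e1 := hY2 b' hb' y' h1
  have e2 := (abs_le.mp (dot_diff_le d _ y' _ h2)).2
  simp only
  linarith

/-- `f` is finite and Lipschitz on `P`. -/
theorem fE_lipschitz {n m s : ℕ}
    (c : Fin n → ℝ) (q d : Fin m → ℝ)
    (A : Matrix (Fin s) (Fin m) ℝ) (T : Matrix (Fin s) (Fin n) ℝ)
    (hdom : (domf c q d A T).Nonempty) :
    ∃ (L : ℝ) (g : (Fin n → ℝ) → (Fin s → ℝ) → ℝ), 0 ≤ L ∧
      (∀ x z, (x, z) ∈ Pfeas A T → fE c q d A T x z = (g x z : EReal)) ∧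
      ∀ x z x' z', (x, z) ∈ Pfeas A T → (x', z') ∈ Pfeas A T →
        g x' z' ≤ g x z + L * (dist x' x + dist z' z) := by
  obtain ⟨⟨x0, z0⟩, h0, h0'⟩ := hdom
  simp only at h0 h0'
  have hne : (Psi d A T x0 z0).Nonempty := by
    by_contra hn
    rw [Set.not_nonempty_iff_eq_empty] at hn
    apply h0
    simp [fE, hn]
  obtain ⟨y0, hy0, hy0min⟩ := hne
  obtain ⟨r, hr⟩ : ∃ r : ℝ, ∀ y ∈ Psi d A T x0 z0, r ≤ q ⬝ᵥ y := by
    have hb : sInf ((fun y => ((q ⬝ᵥ y : ℝ) : EReal)) '' Psi d A T x0 z0) ≠ ⊥ := by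
      intro h
      apply h0'
      simp [fE, h]
    obtain ⟨r, hr⟩ := EReal.lt_iff_exists_real_btwn.mp (bot_lt_iff_ne_bot.mpr hb)
    refine ⟨r, fun y hy => ?_⟩
    have := hr.2.le.trans (sInf_le ⟨y, hy, rfl⟩)
    exact EReal.coe_le_coe_iff.mp this
  obtain ⟨L, v, hL, hv1, hv2, hv3⟩ := lpValue A d (T.mulVec x0 + z0) y0 hy0 (d ⬝ᵥ y0)
    (fun y hy => hy0min y hy)
  let B : (Fin s → ℝ) → Option (Fin s) → ℝ := fun b o => o.elim (v b) b
  have hPsi : ∀ x z y, y ∈ Psi d A T x z ↔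
      ∀ o : Option (Fin s), (o.elim d A : Fin m → ℝ) ⬝ᵥ y ≤ B (T.mulVec x + z) o := by
    intro x z y
    constructor
    · rintro ⟨h1, h2⟩ (_ | i)
      · obtain ⟨y', e1, e2⟩ := hv1 (T.mulVec x + z) ⟨y, h1⟩
        have := h2 y' e1
        simp only [B, Option.elim]
        linarith
      · exact h1 i
    · intro h
      refine ⟨fun i => h (some i), fun y' hy' => ?_⟩
      exact (h none).trans (hv2 _ y' hy')
  obtain ⟨L', w, hL', hw1, hw2, hw3⟩ := lpValue (fun o : Option (Fin s) => (o.elim d A : Fin m → ℝ))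
    q (B (T.mulVec x0 + z0)) y0 ((hPsi x0 z0 y0).mp ⟨hy0, hy0min⟩) r
    (fun y hy => hr y ((hPsi x0 z0 y).mpr hy))
  have hfeas : ∀ x z, (x, z) ∈ Pfeas A T →
      ∃ y, ∀ o : Option (Fin s), (o.elim d A : Fin m → ℝ) ⬝ᵥ y ≤ B (T.mulVec x + z) o := by
    rintro x z ⟨y, hy⟩
    obtain ⟨y', e1, e2⟩ := hv1 (T.mulVec x + z) ⟨y, hy⟩
    refine ⟨y', ?_⟩
    rintro (_ | i)
    · exact e2.le
    · exact e1 i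
  obtain ⟨K, hK⟩ := (Set.finite_range (fun i => ∑ k, |T i k|)).bddAbove
  have hK : ∀ i, ∑ k, |T i k| ≤ |K| := fun i => (hK ⟨i, rfl⟩).trans (le_abs_self _)
  have hK0 := abs_nonneg K
  refine ⟨(∑ k, |c k|) + L' * ((1 + L) * (1 + |K|)),
    fun x z => c ⬝ᵥ x + w (B (T.mulVec x + z)), by positivity, ?_, ?_⟩
  · intro x z hxz
    obtain ⟨y, h1, h2⟩ := hw1 _ (hfeas x z hxz)
    rw [fE, EReal.coe_add]
    congr 1
    apply le_antisymm
    · refine sInf_le ⟨y, (hPsi x z y).mpr h1, ?_⟩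
      simp only [h2]
    · refine le_sInf ?_
      rintro _ ⟨y', hy', rfl⟩
      have := hw2 _ y' ((hPsi x z y').mp hy')
      simp only
      exact_mod_cast this
  · intro x z x' z' h h'
    have dx0 : 0 ≤ dist x' x := dist_nonneg
    have dz0 : 0 ≤ dist z' z := dist_nonneg
    have hc := (abs_le.mp (dot_diff_le c x x' (dist x' x) (fun k => dist_le_pi_dist x' x k))).2
    have hb : ∀ i, |(T.mulVec x' + z') i - (T.mulVec x + z) i| ≤
        (1 + |K|) * (dist x' x + dist z' z) := by
      intro i
      have e1 := dot_diff_le (T i) x x' (dist x' x) (fun k => dist_le_pi_dist x' x k)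
      have e2 : |z' i - z i| ≤ dist z' z := dist_le_pi_dist z' z i
      have e3 : (T.mulVec x' + z') i - (T.mulVec x + z) i
        = (T i ⬝ᵥ x' - T i ⬝ᵥ x) + (z' i - z i) := by
        simp only [Pi.add_apply, Matrix.mulVec]; ring
      rw [e3]
      refine (abs_add_le _ _).trans ?_
      nlinarith [mul_le_mul_of_nonneg_right (hK i) dx0, mul_nonneg hK0 dz0]
    have D0 : 0 ≤ (1 + |K|) * (dist x' x + dist z' z) := by positivity
    have f1 := hv3 _ _ _ D0 h h' hb
    have f2 := hv3 _ _ _ D0 h' h (fun i => by rw [abs_sub_comm]; exact hb i)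
    have g1 := hw3 (B (T.mulVec x + z)) (B (T.mulVec x' + z'))
      ((1 + L) * ((1 + |K|) * (dist x' x + dist z' z))) (by positivity)
      (hfeas x z h) (hfeas x' z' h') (by
        have := mul_nonneg hL D0
        rintro (_ | i)
        · simp only [B, Option.elim]
          rw [abs_le]; constructor <;> linarith
        · simp only [B, Option.elim]
          refine (hb i).trans ?_
          linarith)
    have : 0 ≤ (∑ k, |c k|) * dist z' z := by positivity
    simp only
    linarith

theorem msupport_ae {s : ℕ} (μ : Measure (Fin s → ℝ)) : ∀ᵐ z ∂μ, z ∈ msupport μ := by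
  filter_upwards [Measure.support_mem_ae (μ := μ)] with z hz U hU hzU
  exact ((Measure.mem_support_iff_forall z).mp hz U (hU.mem_nhds hzU)).ne'

theorem valueAtRisk_continuous_and_attained {n m s : ℕ}
    (c : Fin n → ℝ) (q d : Fin m → ℝ)
    (A : Matrix (Fin s) (Fin m) ℝ) (T : Matrix (Fin s) (Fin n) ℝ)
    (μZ : Measure (Fin s → ℝ)) [IsProbabilityMeasure μZ]
    (hdom : (domf c q d A T).Nonempty) (α : ℝ) (hα : α ∈ Set.Ioo (0 : ℝ) 1)
    (Q : (Fin n → ℝ) → ℝ)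
    (hQ : ∀ x, Q x =
      sInf {η : ℝ | ENNReal.ofReal α ≤ μZ {z | fE c q d A T x z ≤ (η : EReal)}}) :
    ContinuousOn Q (PZSet A T μZ) ∧
    (∀ X : Set (Fin n → ℝ), X ⊆ PZSet A T μZ → X.Nonempty → IsCompact X →
      ∃ xstar ∈ X, ∀ x ∈ X, Q xstar ≤ Q x) := by
  obtain ⟨L, g, hL, hg, hLip⟩ := fE_lipschitz c q d A T hdom
  have hsup := msupport_ae μZ
  obtain ⟨z0, hz0⟩ := hsup.exists
  have hα1 : ENNReal.ofReal α < 1 := by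
    rw [← ENNReal.ofReal_one]; exact (ENNReal.ofReal_lt_ofReal_iff one_pos).mpr hα.2
  have hα0 : 0 < ENNReal.ofReal α := ENNReal.ofReal_pos.mpr hα.1
  -- mass concentrates on balls
  have htend : Tendsto (fun k : ℕ => μZ (Metric.closedBall z0 k)) atTop (𝓝 1) := by
    have h1 : Monotone (fun k : ℕ => Metric.closedBall z0 (k : ℝ)) := fun a b hab =>
      Metric.closedBall_subset_closedBall (by exact_mod_cast hab)
    have h2 := tendsto_measure_iUnion_atTop (μ := μZ) h1
    rwa [Metric.iUnion_closedBall_nat, measure_univ] at h2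
  have htend' : Tendsto (fun k : ℕ => μZ (Metric.closedBall z0 k)ᶜ) atTop (𝓝 0) := by
    have h1 : ∀ k : ℕ, μZ (Metric.closedBall z0 k)ᶜ = 1 - μZ (Metric.closedBall z0 k) := fun k =>
      prob_compl_eq_one_sub Metric.isClosed_closedBall.measurableSet
    simp_rw [h1]
    have := ENNReal.Tendsto.sub (tendsto_const_nhds (x := (1 : ℝ≥0∞))) htend (Or.inl ENNReal.one_ne_top)
    simpa using this
  obtain ⟨k1, hk1⟩ := (htend.eventually (lt_mem_nhds hα1)).exists
  obtain ⟨k2, hk2⟩ := (htend'.eventually_lt_const hα0).exists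
  have hnon : ∀ x ∈ PZSet A T μZ,
      {η : ℝ | ENNReal.ofReal α ≤ μZ {z | fE c q d A T x z ≤ (η : EReal)}}.Nonempty := by
    intro x hx
    refine ⟨g x z0 + L * k1, hk1.le.trans (measure_mono_ae ?_)⟩
    filter_upwards [hsup] with z hz hzb
    have hzb : dist z z0 ≤ k1 := hzb
    change fE c q d A T x z ≤ _
    rw [hg x z (hx z hz)]
    have := hLip x z0 x z (hx z0 hz0) (hx z hz)
    rw [dist_self, zero_add] at this
    have h2 := mul_le_mul_of_nonneg_left hzb hL
    exact_mod_cast this.trans (by linarith)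
  have hbdd : ∀ x ∈ PZSet A T μZ,
      BddBelow {η : ℝ | ENNReal.ofReal α ≤ μZ {z | fE c q d A T x z ≤ (η : EReal)}} := by
    intro x hx
    refine ⟨g x z0 - L * k2, fun η hη => ?_⟩
    by_contra hlt
    rw [not_le] at hlt
    refine absurd hk2 (not_lt.mpr (le_trans hη (measure_mono_ae ?_)))
    filter_upwards [hsup] with z hz hzb hzk
    have hzk : dist z z0 ≤ k2 := hzk
    have hzb : fE c q d A T x z ≤ (η : EReal) := hzb
    rw [hg x z (hx z hz)] at hzb
    have hzb : g x z ≤ η := by exact_mod_cast hzb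
    have := hLip x z x z0 (hx z hz) (hx z0 hz0)
    rw [dist_self, zero_add, dist_comm] at this
    have h2 := mul_le_mul_of_nonneg_left hzk hL
    linarith
  have hQlip : ∀ x ∈ PZSet A T μZ, ∀ x' ∈ PZSet A T μZ, Q x' ≤ Q x + L * dist x' x := by
    intro x hx x' hx'
    rw [← sub_le_iff_le_add, hQ x]
    refine le_csInf (hnon x hx) fun η hη => ?_
    rw [sub_le_iff_le_add, hQ x']
    refine csInf_le (hbdd x' hx') (le_trans hη (measure_mono_ae ?_))
    filter_upwards [hsup] with z hz hzb
    have hzb : fE c q d A T x z ≤ (η : EReal) := hzb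
    change fE c q d A T x' z ≤ _
    rw [hg x z (hx z hz)] at hzb
    rw [hg x' z (hx' z hz)]
    have hzb : g x z ≤ η := by exact_mod_cast hzb
    have := hLip x z x' z (hx z hz) (hx' z hz)
    rw [dist_self, add_zero] at this
    exact_mod_cast this.trans (by linarith)
  have hcont : ContinuousOn Q (PZSet A T μZ) :=
    (LipschitzOnWith.of_le_add_mul ⟨L, hL⟩
      (fun x hx x' hx' => hQlip x' hx' x hx)).continuousOn
  refine ⟨hcont, fun X hX hne hcomp => ?_⟩
  obtain ⟨x, hx, hmin⟩ := hcomp.exists_isMinOn hne (hcont.mono hX)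
  exact ⟨x, hx, fun x' hx' => hmin hx'⟩
end
end

section
/- P = ℝⁿ × ℝˢ, i.e. for every x ∈ ℝⁿ and z ∈ ℝˢ the system Ay ≤ Tx + z has a solution y ∈ ℝᵐ, holds if and only if u = 0 is the only vector u ∈ ℝˢ with u ≥ 0 (componentwise) satisfying Aᵀu = 0. -/
open MeasureTheory Matrix Set Topology Filter
open scoped ENNReal NNReal

noncomputable section

theorem Pfeas_eq_univ_iff {n m s : ℕ}
    (A : Matrix (Fin s) (Fin m) ℝ) (T : Matrix (Fin s) (Fin n) ℝ) :
    Pfeas A T = Set.univ ↔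
      ∀ u : Fin s → ℝ, 0 ≤ u → Aᵀ.mulVec u = 0 → u = 0 := by
  constructor
  · intro h u hu hA
    have hp : ((0 : Fin n → ℝ), (fun _ => -1 : Fin s → ℝ)) ∈ Pfeas A T := by
      rw [h]; exact Set.mem_univ _
    obtain ⟨y, hy⟩ := hp
    have hy' : ∀ i, A.mulVec y i ≤ -1 := by
      intro i
      have := hy i
      simpa using this
    have h0 : u ⬝ᵥ A.mulVec y = 0 := by
      rw [Matrix.dotProduct_mulVec, ← Matrix.mulVec_transpose, hA, zero_dotProduct]
    have h1 : u ⬝ᵥ A.mulVec y ≤ ∑ i, -u i := by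
      unfold dotProduct
      apply Finset.sum_le_sum
      intro i _
      have := mul_le_mul_of_nonneg_left (hy' i) (hu i)
      linarith
    rw [h0, Finset.sum_neg_distrib] at h1
    have h2 : ∑ i, u i = 0 :=
      le_antisymm (by linarith) (Finset.sum_nonneg fun i _ => hu i)
    rw [Finset.sum_eq_zero_iff_of_nonneg (fun i _ => hu i)] at h2
    funext i
    exact h2 i (Finset.mem_univ i)
  · intro h
    have key : ∃ y, ∀ i, A.mulVec y i < 0 := by
      by_contra hno
      have hconv : Convex ℝ (Set.univ.pi (fun _ : Fin s => Set.Iio (0 : ℝ))) :=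
        convex_pi fun _ _ => convex_Iio 0
      have hopen : IsOpen (Set.univ.pi (fun _ : Fin s => Set.Iio (0 : ℝ))) :=
        isOpen_set_pi Set.finite_univ fun _ _ => isOpen_Iio
      obtain ⟨f, c, hf1, hf2⟩ := geometric_hahn_banach_open hconv hopen
        (LinearMap.range A.mulVecLin).convex (by
          rw [Set.disjoint_left]
          rintro w hw ⟨y, rfl⟩
          exact hno ⟨y, fun i => hw i (Set.mem_univ i)⟩)
      have hc0 : c ≤ 0 := by
        have := hf2 0 (Submodule.zero_mem _)
        simpa using this
      have hneg : ∀ w : Fin s → ℝ, (∀ i, w i < 0) → f w < 0 := fun w hw =>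
        lt_of_lt_of_le (hf1 w fun i _ => hw i) hc0
      have hrange : ∀ y, f (A.mulVec y) = 0 := by
        intro y
        by_contra hne
        have h1 := hf2 (A.mulVec (((c - 1) / f (A.mulVec y)) • y)) ⟨_, rfl⟩
        rw [Matrix.mulVec_smul, map_smul, smul_eq_mul, div_mul_cancel₀ _ hne] at h1
        linarith
      have hrep : ∀ w : Fin s → ℝ, f w = (fun i => f (Pi.single i 1)) ⬝ᵥ w := by
        intro w
        conv_lhs => rw [pi_eq_sum_univ' w]
        simp [dotProduct, mul_comm]
      have hu0 : (fun i => f (Pi.single i 1)) = (0 : Fin s → ℝ) := by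
        apply h
        · intro i
          show 0 ≤ f (Pi.single i 1)
          by_contra hlt
          push Not at hlt
          have hm : f (fun _ => -1) < 0 := hneg _ fun _ => by norm_num
          have hd : 0 < 1 - f (fun _ => -1) := by linarith
          have h1 := hneg ((-(1 - f (fun _ => -1))) • Pi.single i (1 : ℝ)
            + (-f (Pi.single i 1)) • (fun _ => (-1 : ℝ))) (by
              intro j
              by_cases hij : j = i
              · subst hij
                simp
                linarith
              · simp [hij]
                linarith)
          rw [map_add, map_smul, map_smul, smul_eq_mul, smul_eq_mul] at h1
          nlinarith
        · apply dotProduct_eq_zero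
          intro y
          rw [Matrix.mulVec_transpose, ← Matrix.dotProduct_mulVec, ← hrep, hrange]
      have hm : f (fun _ => -1) < 0 := hneg _ fun _ => by norm_num
      rw [hrep, hu0, zero_dotProduct] at hm
      exact lt_irrefl _ hm
    obtain ⟨y, hy⟩ := key
    rw [Set.eq_univ_iff_forall]
    rintro ⟨x, z⟩
    refine ⟨(∑ i, |(T.mulVec x + z) i / A.mulVec y i|) • y, ?_⟩
    intro i
    show (A.mulVec _) i ≤ (T.mulVec x + z) i
    rw [Matrix.mulVec_smul, Pi.smul_apply, smul_eq_mul]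
    have h1 := Finset.single_le_sum (f := fun i => |(T.mulVec x + z) i / A.mulVec y i|)
      (fun i _ => abs_nonneg _) (Finset.mem_univ i)
    have h2 := mul_le_mul_of_nonpos_right h1 (hy i).le
    refine h2.trans ?_
    have h3 := mul_le_mul_of_nonpos_right
      (le_abs_self ((T.mulVec x + z) i / A.mulVec y i)) (hy i).le
    rwa [div_mul_cancel₀ _ (hy i).ne] at h3
end
end
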